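/- Fix an integer N ≥ 0 and scalars D_1, …, D_N ∈ K. With the modes and conventions of the context (Z₂-twisted bosons b_r, r ∈ ℤ+1/2, and untwisted fermions ψ_r, r ∈ ℤ+1/2), define for each integer i ≥ 1: H_i = ℏ ∂_{x^i} + (ℏ/2) Σ_{r∈ℤ+1/2} :b_r b_{i+N−1−r}: + (ℏ/2) Σ_{r∈ℤ+1/2} (r + (i+N−1)/2) :ψ_{−r} ψ_{i+N−1+r}: + ℏ D_i [i ≤ N], and F_i = ℏ ∂_{θ^i} + ℏ Σ_{r∈ℤ+1/2} b_{i+N−1−r} ψ_r. Then these operators form a representation of a subalgebra of the N=1 super Virasoro algebra in the Ramond sector: for all integers i, j ≥ 1, [H_i, H_j] = ℏ (i−j) H_{i+j+N−1}, [H_i, F_j] = ℏ ((i−N+1)/2 − j) F_{i+j+N−1}, and {F_i, F_j} = 2ℏ H_{i+j+N−1}. -/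

import Mathlib

/-!
Statement 8: the σ-twisted free boson–fermion representation of a subalgebra of the N=1
super Virasoro algebra in the Ramond sector. Twisted bosons `b_r`, `r ∈ ℤ+1/2`, act on
`P = K[t,t⁻¹][x¹,x²,…]` (with `ℏ = t²`, `√ℏ = t`), untwisted fermions `ψ_r`,
`r ∈ ℤ+1/2`, act on `Λ(θ¹,θ²,…)`; a half-integer index `r = n + 1/2 ∈ ℤ + 1/2` is
parametrised by `n ∈ ℤ` throughout.
-/

set_option synthInstance.maxHeartbeats 1000000
set_option maxHeartbeats 1000000

noncomputable section
open TensorProduct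

variable (K : Type) [Field K] [CharZero K]

/-- `R = K[t,t⁻¹]`, with `ℏ = t²`, `√ℏ = t`. -/
abbrev R := LaurentPolynomial K
/-- `ℏ = t² ∈ R`. -/
def hb : R K := LaurentPolynomial.T 2
/-- A scalar `c : K` viewed in `R`. -/
def cs (c : K) : R K := LaurentPolynomial.C c
/-- The even part `P = R[x¹,x²,x³,…]`; variables are indexed by `ℕ+`. -/
abbrev Pev := MvPolynomial ℕ+ (R K)
/-- The odd part `Λ(θ¹,θ²,…)`; generators are indexed by `ℕ+`. -/
abbrev Podd := ExteriorAlgebra (R K) (ℕ+ →₀ R K)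
/-- The full carrier `S = P ⊗_R Λ`. -/
abbrev SuperSpace := Pev K ⊗[R K] Podd K

/-- `∂_{x^a}`, acting through the polynomial factor. -/
def dX (a : ℕ+) : SuperSpace K → SuperSpace K :=
  LinearMap.rTensor (Podd K) (MvPolynomial.pderiv a).toLinearMap

/-- Multiplication by `x^a`, acting through the polynomial factor. -/
def mX (a : ℕ+) : SuperSpace K → SuperSpace K :=
  LinearMap.rTensor (Podd K) (LinearMap.mulLeft (R K) (MvPolynomial.X a))

/-- `∂_{θ^a}` (interior product with the dual basis vector), acting through the odd factor. -/
def dT (a : ℕ+) : SuperSpace K → SuperSpace K :=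
  LinearMap.lTensor (Pev K) (CliffordAlgebra.contractLeft (Finsupp.lapply a))

/-- Left multiplication by `θ^a`, acting through the odd factor. -/
def mT (a : ℕ+) : SuperSpace K → SuperSpace K :=
  LinearMap.lTensor (Pev K)
    (LinearMap.mulLeft (R K) (ExteriorAlgebra.ι (R K) (Finsupp.single a 1)))

/-- `∂_{x^a}` for `a ∈ ℤ`, vanishing for `a < 1`. -/
def dXi (a : ℤ) : SuperSpace K → SuperSpace K :=
  fun v => if h : 1 ≤ a then dX K ⟨a.toNat, by omega⟩ v else 0

/-- `∂_{θ^a}` for `a ∈ ℤ`, vanishing for `a < 1`. -/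
def dTi (a : ℤ) : SuperSpace K → SuperSpace K :=
  fun v => if h : 1 ≤ a then dT K ⟨a.toNat, by omega⟩ v else 0

/-- The σ-twisted boson mode `b_{n+1/2}`: `b_r = √ℏ ∂_{x^{r+1/2}}` and
`b_{−r} = (r/√ℏ) x^{r+1/2}` for `r ∈ ℤ_{≥0}+1/2`. -/
def bos (n : ℤ) : SuperSpace K → SuperSpace K :=
  if h : 0 ≤ n then fun v => (LaurentPolynomial.T 1 : R K) • dX K ⟨(n + 1).toNat, by omega⟩ v
  else fun v =>
    ((((-2 * n - 1 : ℤ) : R K) * cs K (2 : K)⁻¹) * LaurentPolynomial.T (-1)) •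
      mX K ⟨(-n).toNat, by omega⟩ v

/-- The untwisted Neveu–Schwarz fermion mode `ψ_{n+1/2}`:
`ψ_r = √ℏ ∂_{θ^{r+1/2}}` and `ψ_{−r} = (1/√ℏ) θ^{r+1/2}` for `r ∈ ℤ_{≥0}+1/2`. -/
def fer (n : ℤ) : SuperSpace K → SuperSpace K :=
  if h : 0 ≤ n then fun v => (LaurentPolynomial.T 1 : R K) • dT K ⟨(n + 1).toNat, by omega⟩ v
  else fun v => (LaurentPolynomial.T (-1) : R K) • mT K ⟨(-n).toNat, by omega⟩ v

/-- The normally ordered boson bilinear `:b_{n+1/2} b_{m+1/2}:`. -/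
def nb (n m : ℤ) : SuperSpace K → SuperSpace K :=
  if n ≤ m then fun v => bos K n (bos K m v) else fun v => bos K m (bos K n v)

/-- The normally ordered fermion bilinear `:ψ_{n+1/2} ψ_{m+1/2}:`. -/
def nf (n m : ℤ) : SuperSpace K → SuperSpace K :=
  if n ≤ m then fun v => fer K n (fer K m v) else fun v => -(fer K m (fer K n v))

/-- `H_i = ℏ ∂_{x^i} + (ℏ/2) Σ_{r∈ℤ+1/2} :b_r b_{i+N−1−r}:
        + (ℏ/2) Σ_{r∈ℤ+1/2} (r + (i+N−1)/2) :ψ_{−r} ψ_{i+N−1+r}: + ℏ D_i [i ≤ N]`,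
with both half-integer sums parametrised by `r = n + 1/2`, `n ∈ ℤ`. -/
def Hop (N : ℤ) (D : ℤ → K) (i : ℤ) : SuperSpace K → SuperSpace K := fun v =>
  hb K • dXi K i v
    + (cs K (2 : K)⁻¹ * hb K) • (∑ᶠ n : ℤ, nb K n (i + N - 2 - n) v)
    + (cs K (2 : K)⁻¹ * hb K) •
        (∑ᶠ n : ℤ, (((2 * n + i + N : ℤ) : R K) * cs K (2 : K)⁻¹) •
          nf K (-n - 1) (i + N - 1 + n) v)
    + (if i ≤ N then (hb K * cs K (D i)) • v else 0)

/-- `F_i = ℏ ∂_{θ^i} + ℏ Σ_{r∈ℤ+1/2} b_{i+N−1−r} ψ_r`, the half-integer sum being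
parametrised by `r = n + 1/2`, `n ∈ ℤ`. -/
def Fop (N : ℤ) (i : ℤ) : SuperSpace K → SuperSpace K := fun v =>
  hb K • dTi K i v + hb K • (∑ᶠ n : ℤ, bos K (i + N - 2 - n) (fer K n v))

/-!
The modes `b_r`, `ψ_r` are a free boson and a free fermion, and up to the factor `ℏ` the quadratic
parts of `H_i` and `F_i` are the Virasoro operators `L_m` and the supercurrents
`G_m = ∑ b_{m-r} ψ_r` of this system, with `m = i + N - 1`. The commutators of `L_m` and the
anticommutators of `G_m` with a single mode are again single modes, so a second application of the
Leibniz rule, followed by a shift of the summation index, computes `[L_m, G_n]` and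
`{G_m, G_n} = 2 L_{m+n}`; no central term appears at `m = n = 0` because the zero-point energies of
the boson and of the fermion cancel. As `2 L_n = {G_0, G_n}`, the commutator `[L_m, L_n]` follows
from `[L, G]` and `{G, G}`. Finally `∂_{x^i}` and `∂_{θ^i}` are multiples of `b_{i-1/2}` and
`ψ_{i-1/2}`; these modes (anti)commute among themselves and are transformed by `L_m` and `G_m` with
just the right coefficients.
-/

section LocallyFiniteSum

open Filter

variable {ι A V : Type*} [CommRing A] [AddCommGroup V] [Module A V]

/-- The family `T` of endomorphisms is locally finite, that is, only finitely many `T i v` are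
nonzero for each `v`, and `S` is its pointwise sum. -/
structure HasLocallyFiniteSum (T : ι → Module.End A V) (S : Module.End A V) : Prop where
  finite_support (v : V) : (Function.support fun i => T i v).Finite
  finsum_apply (v : V) : ∑ᶠ i, T i v = S v

/-- The pointwise sum of a locally finite family of endomorphisms. -/
def locallyFiniteSum (T : ι → Module.End A V)
    (hT : ∀ v, (Function.support fun i => T i v).Finite) : Module.End A V where
  toFun v := ∑ᶠ i, T i v
  map_add' v w := by simpa only [map_add] using finsum_add_distrib (hT v) (hT w)
  map_smul' c v := by
    simpa only [map_smul, RingHom.id_apply] using (smul_finsum' c (hT v)).symm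

theorem hasLocallyFiniteSum_locallyFiniteSum (T : ι → Module.End A V)
    (hT : ∀ v, (Function.support fun i => T i v).Finite) :
    HasLocallyFiniteSum T (locallyFiniteSum T hT) :=
  ⟨hT, fun _ => rfl⟩

theorem hasLocallyFiniteSum_ite_smul {p : ι → Prop} [DecidablePred p] {a : ι}
    (hp : ∀ i, p i ↔ i = a) (c : ι → A) (T : ι → Module.End A V) :
    HasLocallyFiniteSum (fun i => (if p i then c i else 0) • T i) (c a • T a) := by
  have apply_eq_zero (v : V) (i : ι) (hi : i ≠ a) : ((if p i then c i else 0) • T i) v = 0 := by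
    rw [if_neg (mt (hp i).1 hi), zero_smul, LinearMap.zero_apply]
  refine ⟨fun v => (Set.finite_singleton a).subset fun i hi => ?_, fun v => ?_⟩
  · exact not_imp_comm.1 (apply_eq_zero v i) hi
  · rw [finsum_eq_single _ a (apply_eq_zero v), if_pos ((hp a).2 rfl)]

namespace HasLocallyFiniteSum

variable {T T' : ι → Module.End A V} {S S' : Module.End A V}

theorem unique (h : HasLocallyFiniteSum T S) (h' : HasLocallyFiniteSum T S') : S = S' :=
  LinearMap.ext fun v => (h.finsum_apply v).symm.trans (h'.finsum_apply v)

theorem congr (h : HasLocallyFiniteSum T S) (hT : ∀ i, T' i = T i) : HasLocallyFiniteSum T' S :=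
  funext hT ▸ h

theorem add (h : HasLocallyFiniteSum T S) (h' : HasLocallyFiniteSum T' S') :
    HasLocallyFiniteSum (fun i => T i + T' i) (S + S') where
  finite_support v :=
    ((h.finite_support v).union (h'.finite_support v)).subset (Function.support_add _ _)
  finsum_apply v := by
    simp only [LinearMap.add_apply, finsum_add_distrib (h.finite_support v) (h'.finite_support v),
      h.finsum_apply, h'.finsum_apply]

theorem const_mul (h : HasLocallyFiniteSum T S) (X : Module.End A V) :
    HasLocallyFiniteSum (fun i => X * T i) (X * S) where
  finite_support v := (h.finite_support v).subset fun i hi hTi =>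
    hi (by simp only [Module.End.mul_apply, hTi, map_zero])
  finsum_apply v := by
    rw [Module.End.mul_apply, ← h.finsum_apply v]
    exact (X.toAddMonoidHom.map_finsum (h.finite_support v)).symm

theorem mul_const (h : HasLocallyFiniteSum T S) (X : Module.End A V) :
    HasLocallyFiniteSum (fun i => T i * X) (S * X) where
  finite_support v := h.finite_support (X v)
  finsum_apply v := h.finsum_apply (X v)

theorem const_smul (h : HasLocallyFiniteSum T S) (c : A) :
    HasLocallyFiniteSum (fun i => c • T i) (c • S) := by
  simpa only [smul_mul_assoc, one_mul] using h.const_mul (c • 1)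

theorem neg (h : HasLocallyFiniteSum T S) : HasLocallyFiniteSum (fun i => -T i) (-S) := by
  simpa only [neg_one_mul] using h.const_mul (-1)

theorem const_lie (h : HasLocallyFiniteSum T S) (X : Module.End A V) :
    HasLocallyFiniteSum (fun i => ⁅X, T i⁆) ⁅X, S⁆ := by
  simpa only [Ring.lie_def, sub_eq_add_neg] using (h.const_mul X).add (h.mul_const X).neg

theorem lie_const (h : HasLocallyFiniteSum T S) (X : Module.End A V) :
    HasLocallyFiniteSum (fun i => ⁅T i, X⁆) ⁅S, X⁆ := by
  simpa only [Ring.lie_def, sub_eq_add_neg] using (h.mul_const X).add (h.const_mul X).neg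

theorem comp_equiv (h : HasLocallyFiniteSum T S) (e : ι ≃ ι) :
    HasLocallyFiniteSum (fun i => T (e i)) S where
  finite_support v := (h.finite_support v).preimage e.injective.injOn
  finsum_apply v := (finsum_comp_equiv e (f := fun i => T i v)).trans (h.finsum_apply v)

theorem exists_smul (h : HasLocallyFiniteSum T S) (c : ι → A) :
    ∃ S', HasLocallyFiniteSum (fun i => c i • T i) S' :=
  ⟨_, hasLocallyFiniteSum_locallyFiniteSum _ fun v => (h.finite_support v).subset
    (Function.support_smul_subset_right c fun i => T i v)⟩

theorem commute (h : HasLocallyFiniteSum T S) {X : Module.End A V} (hX : ∀ i, Commute (T i) X) :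
    Commute S X :=
  (h.mul_const X).unique ((h.const_mul X).congr hX)

end HasLocallyFiniteSum

theorem finite_support_of_eventually_eq_zero {M : Type*} [Zero M] {f : ℤ → M}
    (hbot : ∀ᶠ n in atBot, f n = 0) (htop : ∀ᶠ n in atTop, f n = 0) :
    (Function.support f).Finite := by
  have hf : ∀ᶠ n in cofinite, f n = 0 := by
    rw [Int.cofinite_eq]
    exact eventually_sup.2 ⟨hbot, htop⟩
  exact hf

theorem tendsto_const_sub_atBot_atTop (m : ℤ) : Tendsto (fun n => m - n) atBot atTop := by
  simpa only [sub_eq_add_neg] using tendsto_atTop_add_const_left atBot m tendsto_neg_atBot_atTop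

end LocallyFiniteSum

section Modes

open Filter

attribute [local instance] LieRing.ofAssociativeRing

variable (A V : Type*) [CommRing A] [AddCommGroup V] [Module A V]

/-- A representation on `V` of the Clifford algebra of a free fermion with half-integer modes:
`fermion n` is the mode `ψ_{n+1/2}`, and every vector is killed by all modes of large index. -/
structure FreeFermion where
  fermion : ℤ → Module.End A V
  anticomm_fermion (n l : ℤ) :
    fermion n * fermion l + fermion l * fermion n = (if n + l + 1 = 0 then (1 : A) else 0) • 1
  eventually_fermion_apply (v : V) : ∀ᶠ n in atTop, fermion n v = 0

variable {A V}

namespace FreeFermion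

variable (Ψ : FreeFermion A V)

/-- The normally ordered product `:ψ_{n+1/2} ψ_{l+1/2}:`. -/
def normalOrder (n l : ℤ) : Module.End A V :=
  if n ≤ l then Ψ.fermion n * Ψ.fermion l else -(Ψ.fermion l * Ψ.fermion n)

theorem fermion_mul_fermion (n l : ℤ) : Ψ.fermion n * Ψ.fermion l =
    -(Ψ.fermion l * Ψ.fermion n) + (if n + l + 1 = 0 then (1 : A) else 0) • 1 := by
  rw [← Ψ.anticomm_fermion]
  abel

theorem normalOrder_of_ne {n l : ℤ} (h : n + l + 1 ≠ 0) :
    Ψ.normalOrder n l = Ψ.fermion n * Ψ.fermion l := by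
  rw [normalOrder, Ψ.fermion_mul_fermion n l, if_neg h, zero_smul, add_zero, ite_self]

theorem lie_normalOrder (n l : ℤ) (X : Module.End A V) :
    ⁅Ψ.normalOrder n l, X⁆ = ⁅Ψ.fermion n * Ψ.fermion l, X⁆ := by
  rw [normalOrder]
  split_ifs
  · rfl
  · simp only [Ψ.fermion_mul_fermion n l, Ring.lie_def, add_mul, mul_add, smul_mul_assoc,
      mul_smul_comm, one_mul, mul_one, add_sub_add_right_eq_sub]

theorem finite_support_normalOrder (m : ℤ) (v : V) :
    (Function.support fun n => Ψ.normalOrder (m - 1 - n) n v).Finite := by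
  refine finite_support_of_eventually_eq_zero ?_ ?_
  · filter_upwards [eventually_le_atBot (-|m| - 1),
      (tendsto_const_sub_atBot_atTop (m - 1)).eventually (Ψ.eventually_fermion_apply v)]
      with n hn hψ
    rw [normalOrder, if_neg (by grind), LinearMap.neg_apply, Module.End.mul_apply, hψ, map_zero,
      neg_zero]
  · filter_upwards [eventually_ge_atTop |m|, Ψ.eventually_fermion_apply v] with n hn hψ
    rw [normalOrder, if_pos (by grind), Module.End.mul_apply, hψ, map_zero]

theorem exists_hasLocallyFiniteSum_smul_normalOrder (m : ℤ) (c : ℤ → A) :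
    ∃ S, HasLocallyFiniteSum (fun n => c n • Ψ.normalOrder (m - 1 - n) n) S :=
  (hasLocallyFiniteSum_locallyFiniteSum _ (Ψ.finite_support_normalOrder m)).exists_smul c

end FreeFermion

variable (A V) [Invertible (2 : A)]

/-- A representation on `V` of the Heisenberg algebra of the `ℤ₂`-twisted free boson:
`boson n` is the mode `b_{n+1/2}`, and every vector is killed by all modes of large index. -/
structure TwistedBoson where
  boson : ℤ → Module.End A V
  lie_boson (n l : ℤ) : ⁅boson n, boson l⁆ = (if n + l + 1 = 0 then (n : A) + ⅟2 else 0) • 1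
  eventually_boson_apply (v : V) : ∀ᶠ n in atTop, boson n v = 0

/-- A twisted boson and a free fermion on the same space whose modes commute with each other. -/
structure BosonFermion extends TwistedBoson A V, FreeFermion A V where
  commute_boson_fermion (n l : ℤ) : Commute (boson n) (fermion l)

variable {A V}

namespace TwistedBoson

variable (B : TwistedBoson A V)

/-- The normally ordered product `:b_{n+1/2} b_{l+1/2}:`. -/
def normalOrder (n l : ℤ) : Module.End A V :=
  if n ≤ l then B.boson n * B.boson l else B.boson l * B.boson n

theorem boson_mul_boson (n l : ℤ) : B.boson n * B.boson l =
    B.boson l * B.boson n + (if n + l + 1 = 0 then (n : A) + ⅟2 else 0) • 1 := by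
  rw [← B.lie_boson, Ring.lie_def, add_sub_cancel]

theorem normalOrder_of_ne {n l : ℤ} (h : n + l + 1 ≠ 0) :
    B.normalOrder n l = B.boson n * B.boson l := by
  rw [normalOrder, B.boson_mul_boson n l, if_neg h, zero_smul, add_zero, ite_self]

theorem lie_normalOrder (n l : ℤ) (X : Module.End A V) :
    ⁅B.normalOrder n l, X⁆ = ⁅B.boson n * B.boson l, X⁆ := by
  rw [normalOrder]
  split_ifs
  · rfl
  · simp only [B.boson_mul_boson n l, Ring.lie_def, add_mul, mul_add, smul_mul_assoc,
      mul_smul_comm, one_mul, mul_one, add_sub_add_right_eq_sub]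

theorem finite_support_normalOrder (m : ℤ) (v : V) :
    (Function.support fun n => B.normalOrder n (m - 1 - n) v).Finite := by
  refine finite_support_of_eventually_eq_zero ?_ ?_
  · filter_upwards [eventually_le_atBot (-|m| - 1),
      (tendsto_const_sub_atBot_atTop (m - 1)).eventually (B.eventually_boson_apply v)] with n hn hb
    rw [normalOrder, if_pos (by grind), Module.End.mul_apply, hb, map_zero]
  · filter_upwards [eventually_ge_atTop |m|, B.eventually_boson_apply v] with n hn hb
    rw [normalOrder, if_neg (by grind), Module.End.mul_apply, hb, map_zero]

/-- The Virasoro operator `L_m = ½ ∑_{r ∈ ℤ+1/2} :b_r b_{m-r}:` of the boson. -/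
def bosonVirasoro (m : ℤ) : Module.End A V :=
  ⅟(2 : A) • locallyFiniteSum _ (B.finite_support_normalOrder m)

theorem hasLocallyFiniteSum_normalOrder (m : ℤ) :
    HasLocallyFiniteSum (fun n => B.normalOrder n (m - 1 - n)) ((2 : A) • B.bosonVirasoro m) := by
  rw [bosonVirasoro, smul_smul, mul_invOf_self, one_smul]
  exact hasLocallyFiniteSum_locallyFiniteSum _ _

theorem hasLocallyFiniteSum_bosonVirasoro (m : ℤ) :
    HasLocallyFiniteSum (fun n => ⅟(2 : A) • B.normalOrder n (m - 1 - n)) (B.bosonVirasoro m) :=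
  (hasLocallyFiniteSum_locallyFiniteSum _ _).const_smul _

theorem lie_bosonVirasoro_boson (m k : ℤ) :
    ⁅B.bosonVirasoro m, B.boson k⁆ = -((k : A) + ⅟2) • B.boson (m + k) := by
  have lie_mode (n : ℤ) : ⁅⅟(2 : A) • B.normalOrder n (m - 1 - n), B.boson k⁆ =
      (if m - 1 - n + k + 1 = 0 then ⅟2 * (((m - 1 - n : ℤ) : A) + ⅟2) else 0) • B.boson n +
        (if n + k + 1 = 0 then ⅟2 * ((n : A) + ⅟2) else 0) • B.boson (m - 1 - n) := by
    have leibniz (X Y Z : Module.End A V) : ⁅X * Y, Z⁆ = X * ⁅Y, Z⁆ + ⁅X, Z⁆ * Y := by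
      simp only [Ring.lie_def]
      noncomm_ring
    rw [smul_lie, B.lie_normalOrder, leibniz, B.lie_boson, B.lie_boson, mul_smul_comm,
      smul_mul_assoc, mul_one, one_mul]
    split_ifs <;> module
  have hsum := (hasLocallyFiniteSum_ite_smul (p := fun n => m - 1 - n + k + 1 = 0) (a := m + k)
    (fun n => by omega) (fun n => ⅟2 * (((m - 1 - n : ℤ) : A) + ⅟2)) B.boson).add
    (hasLocallyFiniteSum_ite_smul (p := fun n => n + k + 1 = 0) (a := -k - 1)
      (fun n => by omega) (fun n => ⅟2 * ((n : A) + ⅟2)) fun n => B.boson (m - 1 - n))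
  rw [((B.hasLocallyFiniteSum_bosonVirasoro m).lie_const _).unique (hsum.congr lie_mode),
    show m - 1 - (-k - 1) = m + k by ring, ← add_smul]
  congr 1
  push_cast
  linear_combination (⅟2 - (k : A)) * invOf_two_add_invOf_two (R := A)

theorem commute_bosonVirasoro {X : Module.End A V} (hX : ∀ n, Commute (B.boson n) X) (m : ℤ) :
    Commute (B.bosonVirasoro m) X := by
  refine (B.hasLocallyFiniteSum_bosonVirasoro m).commute fun n => Commute.smul_left ?_ _
  rw [normalOrder]
  split_ifs <;> exact (hX _).mul_left (hX _)

end TwistedBoson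

namespace FreeFermion

variable (Ψ : FreeFermion A V)

theorem hasLocallyFiniteSum_fermion_mul_fermion {m : ℤ} (hm : m ≠ 0) :
    HasLocallyFiniteSum (fun n => Ψ.fermion (m - 1 - n) * Ψ.fermion n) 0 := by
  obtain ⟨S, hS⟩ := Ψ.exists_hasLocallyFiniteSum_smul_normalOrder m fun _ => 1
  have hsum : HasLocallyFiniteSum (fun n => Ψ.fermion (m - 1 - n) * Ψ.fermion n) S :=
    hS.congr fun n => by rw [one_smul, Ψ.normalOrder_of_ne (by omega)]
  have neg_sum : -S = S := hsum.neg.unique <| (hsum.comp_equiv (Equiv.subLeft (m - 1))).congr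
    fun n => by
      rw [Equiv.subLeft_apply, sub_sub_cancel, Ψ.fermion_mul_fermion n, if_neg (by omega),
        zero_smul, add_zero]
  have sum_eq_zero : S = 0 := by
    rw [← one_smul A S, ← invOf_two_add_invOf_two, add_smul, ← smul_add,
      neg_eq_iff_add_eq_zero.1 neg_sum, smul_zero]
  rwa [sum_eq_zero] at hsum

/-- The Virasoro operator `L_m = ½ ∑_{r ∈ ℤ+1/2} (r - m/2) :ψ_{m-r} ψ_r:` of the fermion. -/
def fermionVirasoro (m : ℤ) : Module.End A V :=
  (Ψ.exists_hasLocallyFiniteSum_smul_normalOrder m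
    fun n : ℤ => ⅟2 * ((n : A) + ⅟2 - ⅟2 * (m : A))).choose

theorem hasLocallyFiniteSum_fermionVirasoro (m : ℤ) :
    HasLocallyFiniteSum
      (fun n : ℤ => (⅟2 * ((n : A) + ⅟2 - ⅟2 * (m : A))) • Ψ.normalOrder (m - 1 - n) n)
      (Ψ.fermionVirasoro m) :=
  Exists.choose_spec _

theorem lie_fermionVirasoro_fermion (m k : ℤ) :
    ⁅Ψ.fermionVirasoro m, Ψ.fermion k⁆ =
      -((k : A) + ⅟2 + ⅟2 * (m : A)) • Ψ.fermion (m + k) := by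
  let c (n : ℤ) : A := ⅟2 * ((n : A) + ⅟2 - ⅟2 * (m : A))
  have lie_mode (n : ℤ) : ⁅c n • Ψ.normalOrder (m - 1 - n) n, Ψ.fermion k⁆ =
      (if n + k + 1 = 0 then c n else 0) • Ψ.fermion (m - 1 - n) +
        (if m - 1 - n + k + 1 = 0 then -c n else 0) • Ψ.fermion n := by
    have leibniz (X Y Z : Module.End A V) :
        ⁅X * Y, Z⁆ = X * (Y * Z + Z * Y) - (X * Z + Z * X) * Y := by
      rw [Ring.lie_def]
      noncomm_ring
    rw [smul_lie, Ψ.lie_normalOrder, leibniz, Ψ.anticomm_fermion, Ψ.anticomm_fermion,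
      mul_smul_comm, smul_mul_assoc, mul_one, one_mul]
    split_ifs <;> module
  have hsum := (hasLocallyFiniteSum_ite_smul (p := fun n => n + k + 1 = 0) (a := -k - 1)
    (fun n => by omega) c fun n => Ψ.fermion (m - 1 - n)).add
    (hasLocallyFiniteSum_ite_smul (p := fun n => m - 1 - n + k + 1 = 0) (a := m + k)
      (fun n => by omega) (fun n => -c n) Ψ.fermion)
  rw [((Ψ.hasLocallyFiniteSum_fermionVirasoro m).lie_const _).unique (hsum.congr lie_mode),
    show m - 1 - (-k - 1) = m + k by ring, ← add_smul]
  congr 1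
  simp only [c]
  push_cast
  linear_combination -(k : A) * invOf_two_add_invOf_two (R := A)

theorem commute_fermionVirasoro {X : Module.End A V} (hX : ∀ n, Commute (Ψ.fermion n) X) (m : ℤ) :
    Commute (Ψ.fermionVirasoro m) X := by
  refine (Ψ.hasLocallyFiniteSum_fermionVirasoro m).commute fun n => Commute.smul_left ?_ _
  rw [normalOrder]
  split_ifs
  · exact (hX _).mul_left (hX _)
  · exact ((hX _).mul_left (hX _)).neg_left

end FreeFermion

namespace BosonFermion

variable (M : BosonFermion A V)

/-- The Virasoro operators `L_m` of the boson-fermion system. -/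
def virasoro (m : ℤ) : Module.End A V :=
  M.bosonVirasoro m + M.fermionVirasoro m

theorem lie_virasoro_boson (m k : ℤ) :
    ⁅M.virasoro m, M.boson k⁆ = -((k : A) + ⅟2) • M.boson (m + k) := by
  rw [virasoro, add_lie, M.lie_bosonVirasoro_boson,
    (M.commute_fermionVirasoro (fun n => (M.commute_boson_fermion k n).symm) m).lie_eq, add_zero]

theorem lie_virasoro_fermion (m k : ℤ) :
    ⁅M.virasoro m, M.fermion k⁆ = -((k : A) + ⅟2 + ⅟2 * (m : A)) • M.fermion (m + k) := by
  rw [virasoro, add_lie, M.lie_fermionVirasoro_fermion,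
    (M.commute_bosonVirasoro (fun n => M.commute_boson_fermion n k) m).lie_eq, zero_add]

theorem finite_support_boson_mul_fermion (m : ℤ) (v : V) :
    (Function.support fun n => (M.boson (m - 1 - n) * M.fermion n) v).Finite := by
  refine finite_support_of_eventually_eq_zero ?_ ?_
  · filter_upwards [(tendsto_const_sub_atBot_atTop (m - 1)).eventually
      (M.eventually_boson_apply v)] with n hb
    rw [(M.commute_boson_fermion _ n).eq, Module.End.mul_apply, hb, map_zero]
  · filter_upwards [M.eventually_fermion_apply v] with n hψ
    rw [Module.End.mul_apply, hψ, map_zero]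

/-- The supercurrent modes `G_m = ∑_{r ∈ ℤ+1/2} b_{m-r} ψ_r` of the boson-fermion system. -/
def supercurrent (m : ℤ) : Module.End A V :=
  locallyFiniteSum _ (M.finite_support_boson_mul_fermion m)

theorem hasLocallyFiniteSum_supercurrent (m : ℤ) :
    HasLocallyFiniteSum (fun n => M.boson (m - 1 - n) * M.fermion n) (M.supercurrent m) :=
  hasLocallyFiniteSum_locallyFiniteSum _ _

theorem lie_supercurrent_boson (m k : ℤ) :
    ⁅M.supercurrent m, M.boson k⁆ = -((k : A) + ⅟2) • M.fermion (m + k) := by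
  have lie_mode (n : ℤ) : ⁅M.boson (m - 1 - n) * M.fermion n, M.boson k⁆ =
      (if m - 1 - n + k + 1 = 0 then ((m - 1 - n : ℤ) : A) + ⅟2 else 0) • M.fermion n := by
    have leibniz (X Y Z : Module.End A V) (h : Commute Y Z) : ⁅X * Y, Z⁆ = ⁅X, Z⁆ * Y := by
      simp only [Ring.lie_def, sub_mul, mul_assoc, h.eq]
    rw [leibniz _ _ _ (M.commute_boson_fermion k n).symm, M.lie_boson, smul_one_mul]
  have hsum := hasLocallyFiniteSum_ite_smul (p := fun n => m - 1 - n + k + 1 = 0) (a := m + k)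
    (fun n => by omega) (fun n => ((m - 1 - n : ℤ) : A) + ⅟2) M.fermion
  rw [((M.hasLocallyFiniteSum_supercurrent m).lie_const _).unique (hsum.congr lie_mode)]
  congr 1
  push_cast
  linear_combination invOf_two_add_invOf_two (R := A)

theorem anticomm_supercurrent_fermion (m k : ℤ) :
    M.supercurrent m * M.fermion k + M.fermion k * M.supercurrent m = M.boson (m + k) := by
  have anticomm_mode (n : ℤ) : M.boson (m - 1 - n) * M.fermion n * M.fermion k +
      M.fermion k * (M.boson (m - 1 - n) * M.fermion n) =
      (if n + k + 1 = 0 then (1 : A) else 0) • M.boson (m - 1 - n) := by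
    rw [← mul_assoc, ← (M.commute_boson_fermion (m - 1 - n) k).eq, mul_assoc, mul_assoc, ← mul_add,
      M.anticomm_fermion, mul_smul_comm, mul_one]
  have hsum := hasLocallyFiniteSum_ite_smul (p := fun n => n + k + 1 = 0) (a := -k - 1)
    (fun n => by omega) (fun _ => (1 : A)) fun n => M.boson (m - 1 - n)
  have hG := M.hasLocallyFiniteSum_supercurrent m
  rw [((hG.mul_const _).add (hG.const_mul _)).unique (hsum.congr anticomm_mode), one_smul,
    show m - 1 - (-k - 1) = m + k by ring]

theorem lie_virasoro_supercurrent (m n : ℤ) :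
    ⁅M.virasoro m, M.supercurrent n⁆ = (⅟2 * (m : A) - n) • M.supercurrent (m + n) := by
  have half : ⅟(2 : A) + ⅟2 = 1 := invOf_two_add_invOf_two
  let T (k : ℤ) : Module.End A V := M.boson (m + n - 1 - k) * M.fermion k
  let c (k : ℤ) : A := k + ⅟2 - m + ⅟2 * m
  have lie_mode (k : ℤ) :
      ⁅M.virasoro m, M.boson (n - 1 - k) * M.fermion k⁆ + c (m + k) • T (m + k) =
        (⅟2 * (m : A) - n) • T k + c k • T k := by
    have leibniz (X Y Z : Module.End A V) : ⁅X, Y * Z⁆ = ⁅X, Y⁆ * Z + Y * ⁅X, Z⁆ := by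
      simp only [Ring.lie_def]
      noncomm_ring
    simp only [leibniz, M.lie_virasoro_boson, M.lie_virasoro_fermion, T, c, smul_mul_assoc,
      mul_smul_comm, show m + (n - 1 - k) = m + n - 1 - k by ring,
      show m + n - 1 - (m + k) = n - 1 - k by ring]
    push_cast
    linear_combination (norm := module)
      -(1 + (m : A)) • half • (M.boson (m + n - 1 - k) * M.fermion k)
  -- The two halves of the Leibniz rule are families over shifted index sets; adding the family
  -- `c k • T k` to both sides makes the comparison termwise.
  have hG := M.hasLocallyFiniteSum_supercurrent (m + n)
  obtain ⟨S, hS⟩ := hG.exists_smul c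
  exact add_right_cancel <|
    (((M.hasLocallyFiniteSum_supercurrent n).const_lie _).add
      (hS.comp_equiv (Equiv.addLeft m))).unique (((hG.const_smul _).add hS).congr lie_mode)

/- The zero-point energies `k + ½` of the boson and of the fermion cancel. -/
theorem normalOrder_add_smul_normalOrder (k : ℤ) :
    M.toTwistedBoson.normalOrder (-1 - k) k +
        ((k : A) + ⅟2) • M.toFreeFermion.normalOrder (-1 - k) k =
      M.boson (-1 - k) * M.boson k + ((k : A) + ⅟2) • (M.fermion (-1 - k) * M.fermion k) := by
  rw [TwistedBoson.normalOrder, FreeFermion.normalOrder]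
  split_ifs
  · rfl
  · rw [M.boson_mul_boson (-1 - k), M.fermion_mul_fermion (-1 - k), if_pos (by ring),
      if_pos (by ring)]
    push_cast
    linear_combination (norm := module)
      (-invOf_two_add_invOf_two (R := A)) • (1 : Module.End A V)

theorem hasLocallyFiniteSum_anticomm_supercurrent {m n : ℤ} (hmn : m + n = 0 → m = 0) :
    HasLocallyFiniteSum (fun k : ℤ => M.boson (n - 1 - k) * M.boson (m + k) +
        ((k : A) + ⅟2 - n) • (M.fermion (m + n - 1 - k) * M.fermion k))
      ((2 : A) • M.virasoro (m + n)) := by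
  have hB := M.hasLocallyFiniteSum_normalOrder (m + n)
  have hF := (M.hasLocallyFiniteSum_fermionVirasoro (m + n)).const_smul 2
  have half : ⅟(2 : A) + ⅟2 = 1 := invOf_two_add_invOf_two
  rw [virasoro, smul_add]
  by_cases h : m + n = 0
  · obtain rfl := hmn h
    obtain rfl : n = 0 := by omega
    refine ((hB.comp_equiv (Equiv.subLeft (-1))).add hF).congr fun k => ?_
    rw [Equiv.subLeft_apply, show (0 : ℤ) + 0 - 1 - (-1 - k) = k by ring,
      show (0 : ℤ) + 0 - 1 - k = -1 - k by ring, zero_sub, zero_add]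
    push_cast
    linear_combination (norm := module) -M.normalOrder_add_smul_normalOrder k -
      ((k : A) + (⅟2 : A)) • half • M.toFreeFermion.normalOrder (-1 - k) k
  · have hB' : HasLocallyFiniteSum (fun k => M.boson (n - 1 - k) * M.boson (m + k))
        ((2 : A) • M.bosonVirasoro (m + n)) :=
      (hB.comp_equiv (Equiv.subLeft (n - 1))).congr fun k => by
        rw [Equiv.subLeft_apply, show m + n - 1 - (n - 1 - k) = m + k by ring,
          M.toTwistedBoson.normalOrder_of_ne (by omega)]
    have hF' := hF.add
      ((M.hasLocallyFiniteSum_fermion_mul_fermion h).const_smul (⅟2 * ((m : A) - n)))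
    rw [smul_zero, add_zero] at hF'
    refine (hB'.add hF').congr fun k => ?_
    rw [M.toFreeFermion.normalOrder_of_ne (by omega)]
    push_cast
    linear_combination (norm := module)
      ((⅟2 : A) * (m : A) + ((⅟2 : A) + 1) * (n : A) - (k : A) - (⅟2 : A)) • half •
        (M.fermion (m + n - 1 - k) * M.fermion k)

theorem anticomm_supercurrent {m n : ℤ} (hmn : m + n = 0 → m = 0) :
    M.supercurrent m * M.supercurrent n + M.supercurrent n * M.supercurrent m =
      (2 : A) • M.virasoro (m + n) := by
  have anticomm_mode (k : ℤ) : M.supercurrent m * (M.boson (n - 1 - k) * M.fermion k) +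
      M.boson (n - 1 - k) * M.fermion k * M.supercurrent m =
      M.boson (n - 1 - k) * M.boson (m + k) +
        ((k : A) + ⅟2 - n) • (M.fermion (m + n - 1 - k) * M.fermion k) := by
    have leibniz (X Y Z : Module.End A V) :
        X * (Y * Z) + Y * Z * X = Y * (X * Z + Z * X) + ⁅X, Y⁆ * Z := by
      rw [Ring.lie_def]
      noncomm_ring
    rw [leibniz, M.anticomm_supercurrent_fermion, M.lie_supercurrent_boson, smul_mul_assoc,
      show m + (n - 1 - k) = m + n - 1 - k by ring]
    push_cast
    linear_combination (norm := module) -(invOf_two_add_invOf_two (R := A)) •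
      (M.fermion (m + n - 1 - k) * M.fermion k)
  have hG := M.hasLocallyFiniteSum_supercurrent n
  exact ((hG.const_mul _).add (hG.mul_const _)).unique
    ((M.hasLocallyFiniteSum_anticomm_supercurrent hmn).congr anticomm_mode)

theorem lie_virasoro_virasoro {m n : ℤ} (hmn : m + n = 0 → m = 0) :
    ⁅M.virasoro m, M.virasoro n⁆ = ((m : A) - n) • M.virasoro (m + n) := by
  have half : ⅟(2 : A) + ⅟2 = 1 := invOf_two_add_invOf_two
  have two_smul_virasoro (k : ℤ) : (2 : A) • M.virasoro k =
      M.supercurrent 0 * M.supercurrent k + M.supercurrent k * M.supercurrent 0 := by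
    rw [M.anticomm_supercurrent fun _ => rfl, zero_add]
  have leibniz (X Y Z : Module.End A V) :
      ⁅X, Y * Z + Z * Y⁆ = (⁅X, Y⁆ * Z + Z * ⁅X, Y⁆) + (Y * ⁅X, Z⁆ + ⁅X, Z⁆ * Y) := by
    simp only [Ring.lie_def]
    noncomm_ring
  rw [← (isUnit_of_invertible (2 : A)).smul_left_cancel, ← lie_smul, two_smul_virasoro, leibniz,
    M.lie_virasoro_supercurrent, M.lie_virasoro_supercurrent, add_zero]
  simp only [smul_mul_assoc, mul_smul_comm, ← smul_add]
  rw [M.anticomm_supercurrent hmn, M.anticomm_supercurrent fun _ => rfl, zero_add]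
  push_cast
  linear_combination (norm := module) (2 * (m : A)) • half • M.virasoro (m + n)

/-- The Virasoro operators with the dilaton shift `s • b_{i-1/2}` and a scalar `c`, rescaled by `t`:
with `s = 1 / √ℏ` and `t = ℏ` these are the `H_i` of the paper. -/
def shiftedVirasoro (s t c : A) (N i : ℤ) : Module.End A V :=
  t • (s • M.boson (i - 1) + M.virasoro (i + N - 1) + c • 1)

/-- The supercurrents with the shift `s • ψ_{i-1/2}`, rescaled by `t`: with `s = 1 / √ℏ` and `t = ℏ`
these are the `F_i` of the paper. -/
def shiftedSupercurrent (s t : A) (N i : ℤ) : Module.End A V :=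
  t • (s • M.fermion (i - 1) + M.supercurrent (i + N - 1))

section Shifted

variable (s t c d : A) {N i j : ℤ}

theorem lie_shiftedVirasoro (hi : 1 ≤ i) (hj : 1 ≤ j) (hiN : 1 ≤ i + N) (hjN : 1 ≤ j + N) :
    ⁅M.shiftedVirasoro s t c N i, M.shiftedVirasoro s t d N j⁆ =
      (t * ((i : A) - j)) • M.shiftedVirasoro s t 0 N (i + j + N - 1) := by
  have lie_one (X : Module.End A V) : ⁅X, (1 : Module.End A V)⁆ = 0 := (Commute.one_right X).lie_eq
  have one_lie (X : Module.End A V) : ⁅(1 : Module.End A V), X⁆ = 0 := (Commute.one_left X).lie_eq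
  have lie_boson_virasoro : ⁅M.boson (i - 1), M.virasoro (j + N - 1)⁆ = _ :=
    (lie_skew _ _).symm.trans (congrArg Neg.neg (M.lie_virasoro_boson (j + N - 1) (i - 1)))
  simp only [shiftedVirasoro, smul_lie, lie_smul, add_lie, lie_add, lie_one, one_lie,
    M.lie_boson, M.lie_virasoro_boson, lie_boson_virasoro,
    M.lie_virasoro_virasoro (m := i + N - 1) (n := j + N - 1) (by omega),
    if_neg (show i - 1 + (j - 1) + 1 ≠ 0 by omega),
    show i + N - 1 + (j + N - 1) = i + j + N - 1 + N - 1 by ring,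
    show i + N - 1 + (j - 1) = i + j + N - 1 - 1 by ring,
    show j + N - 1 + (i - 1) = i + j + N - 1 - 1 by ring]
  push_cast
  module

theorem lie_shiftedVirasoro_shiftedSupercurrent :
    ⁅M.shiftedVirasoro s t c N i, M.shiftedSupercurrent s t N j⁆ =
      (t * ((i : A) - N + 1 - 2 * j) * ⅟2) • M.shiftedSupercurrent s t N (i + j + N - 1) := by
  have half : ⅟(2 : A) + ⅟2 = 1 := invOf_two_add_invOf_two
  have one_lie (X : Module.End A V) : ⁅(1 : Module.End A V), X⁆ = 0 := (Commute.one_left X).lie_eq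
  have lie_boson_supercurrent : ⁅M.boson (i - 1), M.supercurrent (j + N - 1)⁆ = _ :=
    (lie_skew _ _).symm.trans (congrArg Neg.neg (M.lie_supercurrent_boson (j + N - 1) (i - 1)))
  simp only [shiftedVirasoro, shiftedSupercurrent, smul_lie, lie_smul, add_lie, lie_add, one_lie,
    (M.commute_boson_fermion _ _).lie_eq, M.lie_virasoro_fermion, lie_boson_supercurrent,
    M.lie_virasoro_supercurrent,
    show i + N - 1 + (j + N - 1) = i + j + N - 1 + N - 1 by ring,
    show i + N - 1 + (j - 1) = i + j + N - 1 - 1 by ring,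
    show j + N - 1 + (i - 1) = i + j + N - 1 - 1 by ring]
  push_cast
  linear_combination (norm := module)
    (t * t * s * ((j : A) - (i : A))) • half • M.fermion (i + j + N - 1 - 1) +
      (t * t * ((N : A) - 1 + (j : A))) • half • M.supercurrent (i + j + N - 1 + N - 1)

theorem anticomm_shiftedSupercurrent (hi : 1 ≤ i) (hj : 1 ≤ j) (hiN : 1 ≤ i + N)
    (hjN : 1 ≤ j + N) :
    M.shiftedSupercurrent s t N i * M.shiftedSupercurrent s t N j +
        M.shiftedSupercurrent s t N j * M.shiftedSupercurrent s t N i =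
      (2 * t) • M.shiftedVirasoro s t 0 N (i + j + N - 1) := by
  have hψψ := M.anticomm_fermion (i - 1) (j - 1)
  have hGG := M.anticomm_supercurrent (m := i + N - 1) (n := j + N - 1) (by omega)
  have hGψ := M.anticomm_supercurrent_fermion (i + N - 1) (j - 1)
  have hψG := M.anticomm_supercurrent_fermion (j + N - 1) (i - 1)
  rw [if_neg (by omega), zero_smul] at hψψ
  rw [show i + N - 1 + (j + N - 1) = i + j + N - 1 + N - 1 by ring] at hGG
  rw [show i + N - 1 + (j - 1) = i + j + N - 1 - 1 by ring] at hGψ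
  rw [show j + N - 1 + (i - 1) = i + j + N - 1 - 1 by ring] at hψG
  simp only [shiftedSupercurrent, shiftedVirasoro, mul_add, add_mul, smul_mul_assoc, mul_smul_comm]
  linear_combination (norm := module)
    (t * t * s * s) • hψψ + (t * t * s) • hGψ + (t * t * s) • hψG + (t * t) • hGG

end Shifted

end BosonFermion

end Modes

section FockSpace

open Filter MvPolynomial

attribute [local instance] LieRing.ofAssociativeRing

variable {σ A : Type*} [CommRing A]

theorem commute_pderiv (a b : σ) :
    Commute (pderiv (R := A) a).toLinearMap (pderiv (R := A) b).toLinearMap := by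
  have lie_pderiv : ⁅pderiv (R := A) a, pderiv (R := A) b⁆ = 0 := by
    classical
    refine derivation_ext fun c => ?_
    rw [Derivation.commutator_apply, pderiv_X, pderiv_X, Pi.single_apply, Pi.single_apply]
    split_ifs <;> simp
  rw [commute_iff_lie_eq, ← Derivation.commutator_coe_linear_map, lie_pderiv]
  rfl

theorem lie_pderiv_mulLeft_X [DecidableEq σ] (a b : σ) :
    ⁅(pderiv (R := A) a).toLinearMap, LinearMap.mulLeft A (X b : MvPolynomial σ A)⁆ =
      (if a = b then (1 : A) else 0) • 1 := by
  refine LinearMap.ext fun p => ?_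
  simp only [Ring.lie_def, LinearMap.sub_apply, Module.End.mul_apply, LinearMap.mulLeft_apply,
    Derivation.coeFn_coe, Derivation.leibniz, pderiv_X, Pi.single_apply, eq_comm (a := b),
    smul_eq_mul, add_sub_cancel_left, LinearMap.smul_apply, Module.End.one_apply]
  split_ifs <;> simp

theorem commute_mulLeft {B : Type*} [CommRing B] [Algebra A B] (x y : B) :
    Commute (LinearMap.mulLeft A x) (LinearMap.mulLeft A y) :=
  LinearMap.ext fun p => mul_left_comm x y p

theorem eventually_pderiv_apply_eq_zero (p : MvPolynomial σ A) :
    ∀ᶠ a in cofinite, pderiv a p = 0 :=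
  (Finset.eventually_cofinite_notMem p.vars).mono fun _ => pderiv_eq_zero_of_notMem_vars

theorem anticomm_contractLeft {M : Type*} [AddCommGroup M] [Module A M] {Q : QuadraticForm A M}
    (d d' : Module.Dual A M) :
    (CliffordAlgebra.contractLeft d : Module.End A (CliffordAlgebra Q)) *
        CliffordAlgebra.contractLeft d' +
      CliffordAlgebra.contractLeft d' * CliffordAlgebra.contractLeft d = 0 :=
  LinearMap.ext fun q => add_eq_zero_iff_eq_neg.2 (CliffordAlgebra.contractLeft_comm d d' q)

theorem anticomm_contractLeft_mulLeft_ι {M : Type*} [AddCommGroup M] [Module A M]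
    {Q : QuadraticForm A M} (d : Module.Dual A M) (x : M) :
    (CliffordAlgebra.contractLeft d : Module.End A (CliffordAlgebra Q)) *
        LinearMap.mulLeft A (CliffordAlgebra.ι Q x) +
      LinearMap.mulLeft A (CliffordAlgebra.ι Q x) * CliffordAlgebra.contractLeft d = d x • 1 :=
  LinearMap.ext fun q => add_eq_of_eq_sub (CliffordAlgebra.contractLeft_ι_mul d x q)

theorem anticomm_mulLeft_exteriorι {M : Type*} [AddCommGroup M] [Module A M] (x y : M) :
    LinearMap.mulLeft A (ExteriorAlgebra.ι A x) * LinearMap.mulLeft A (ExteriorAlgebra.ι A y) +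
      LinearMap.mulLeft A (ExteriorAlgebra.ι A y) * LinearMap.mulLeft A (ExteriorAlgebra.ι A x) =
      0 :=
  LinearMap.ext fun q => by
    simp only [LinearMap.add_apply, Module.End.mul_apply, LinearMap.mulLeft_apply, ← mul_assoc,
      ← add_mul, ExteriorAlgebra.ι_add_mul_swap, zero_mul, LinearMap.zero_apply]

theorem eventually_contractLeft_lapply_eq_zero {Q : QuadraticForm A (σ →₀ A)}
    (q : CliffordAlgebra Q) :
    ∀ᶠ a in cofinite, CliffordAlgebra.contractLeft (Finsupp.lapply a) q = 0 := by
  induction q using CliffordAlgebra.left_induction with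
  | algebraMap r => exact .of_forall fun a => CliffordAlgebra.contractLeft_algebraMap Q _ r
  | add x y hx hy =>
    filter_upwards [hx, hy] with a hxa hya
    rw [map_add, hxa, hya, add_zero]
  | ι_mul x m hx =>
    filter_upwards [hx, Finset.eventually_cofinite_notMem m.support] with a hxa hma
    rw [CliffordAlgebra.contractLeft_ι_mul, hxa, mul_zero, sub_zero, Finsupp.lapply_apply,
      Finsupp.notMem_support_iff.1 hma, zero_smul]

theorem eventually_succPNat_of_cofinite {p : ℕ+ → Prop} (hp : ∀ᶠ a in cofinite, p a) :
    ∀ᶠ k : ℕ in atTop, p k.succPNat := by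
  rw [← Nat.cofinite_eq_atTop]
  exact Nat.succPNat_injective.tendsto_cofinite.eventually hp

theorem ofNat_add_negSucc_add_one_eq_zero_iff (k l : ℕ) :
    Int.ofNat k + Int.negSucc l + 1 = 0 ↔ k = l := by
  grind

variable {V W : Type*} [AddCommGroup V] [Module A V] [AddCommGroup W] [Module A W]

/-- The free fermion with modes `ψ_{k+1/2} = s a_k` and `ψ_{-k-1/2} = s⁻¹ a'_k`, `k ≥ 0`, for
annihilation operators `a` and creation operators `a'` satisfying the canonical anticommutation
relations. -/
def FreeFermion.ofCreationAnnihilation (a a' : ℕ → Module.End A V)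
    (anticomm_annihilation : ∀ k l, a k * a l + a l * a k = 0)
    (anticomm_creation : ∀ k l, a' k * a' l + a' l * a' k = 0)
    (anticomm_annihilation_creation :
      ∀ k l, a k * a' l + a' l * a k = (if k = l then (1 : A) else 0) • 1)
    (eventually_annihilation : ∀ v, ∀ᶠ k in atTop, a k v = 0) (s : Aˣ) : FreeFermion A V where
  fermion
    | .ofNat k => (s : A) • a k
    | .negSucc k => (↑s⁻¹ : A) • a' k
  anticomm_fermion
    | .ofNat k, .ofNat l => by
      rw [if_neg (by grind), zero_smul, smul_mul_smul_comm, smul_mul_smul_comm, ← smul_add,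
        anticomm_annihilation, smul_zero]
    | .ofNat k, .negSucc l => by
      dsimp only
      rw [smul_mul_smul_comm, smul_mul_smul_comm, s.inv_mul, s.mul_inv, one_smul, one_smul,
        anticomm_annihilation_creation]
      simp only [ofNat_add_negSucc_add_one_eq_zero_iff]
    | .negSucc k, .ofNat l => by
      dsimp only
      rw [smul_mul_smul_comm, smul_mul_smul_comm, s.inv_mul, s.mul_inv, one_smul, one_smul,
        add_comm, anticomm_annihilation_creation, add_comm (Int.negSucc k)]
      simp only [ofNat_add_negSucc_add_one_eq_zero_iff]
    | .negSucc k, .negSucc l => by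
      rw [if_neg (by grind), zero_smul, smul_mul_smul_comm, smul_mul_smul_comm, ← smul_add,
        anticomm_creation, smul_zero]
  eventually_fermion_apply v := by
    rw [← Nat.map_cast_int_atTop, eventually_map]
    filter_upwards [eventually_annihilation v] with k hk
    exact (congrArg ((s : A) • ·) hk).trans (smul_zero _)

/-- The free fermion acting on the exterior algebra by `ψ_r = s ∂_{θ^{r+1/2}}` and
`ψ_{-r} = s⁻¹ θ^{r+1/2}` for `r > 0`. -/
def FreeFermion.exterior (s : Aˣ) : FreeFermion A (ExteriorAlgebra A (ℕ+ →₀ A)) :=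
  .ofCreationAnnihilation
    (fun k => CliffordAlgebra.contractLeft (Finsupp.lapply k.succPNat))
    (fun k => LinearMap.mulLeft A (ExteriorAlgebra.ι A (Finsupp.single k.succPNat 1)))
    (fun _ _ => anticomm_contractLeft _ _)
    (fun _ _ => anticomm_mulLeft_exteriorι _ _)
    (fun k l => by
      rw [ExteriorAlgebra.ι, anticomm_contractLeft_mulLeft_ι, Finsupp.lapply_apply,
        Finsupp.single_apply]
      simp only [Nat.succPNat_inj, eq_comm])
    (fun q => eventually_succPNat_of_cofinite (eventually_contractLeft_lapply_eq_zero q))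
    s

variable [Invertible (2 : A)]

/-- The twisted boson with modes `b_{k+1/2} = s a_k` and `b_{-k-1/2} = (k + ½) s⁻¹ a'_k`, `k ≥ 0`,
for annihilation operators `a` and creation operators `a'` satisfying the canonical commutation
relations. -/
def TwistedBoson.ofCreationAnnihilation (a a' : ℕ → Module.End A V)
    (commute_annihilation : ∀ k l, Commute (a k) (a l))
    (commute_creation : ∀ k l, Commute (a' k) (a' l))
    (lie_annihilation_creation : ∀ k l, ⁅a k, a' l⁆ = (if k = l then (1 : A) else 0) • 1)
    (eventually_annihilation : ∀ v, ∀ᶠ k in atTop, a k v = 0) (s : Aˣ) : TwistedBoson A V where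
  boson
    | .ofNat k => (s : A) • a k
    | .negSucc k => (((k : A) + ⅟2) * ↑s⁻¹) • a' k
  lie_boson
    | .ofNat k, .ofNat l => by
      rw [if_neg (by grind), zero_smul]
      exact (((commute_annihilation k l).smul_left _).smul_right _).lie_eq
    | .ofNat k, .negSucc l => by
      dsimp only
      rw [smul_lie, lie_smul, lie_annihilation_creation, smul_smul, smul_smul]
      simp only [ofNat_add_negSucc_add_one_eq_zero_iff]
      congr 1
      split_ifs with hkl
      · rw [mul_one, mul_left_comm, s.mul_inv, mul_one, hkl, Int.ofNat_eq_natCast, Int.cast_natCast]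
      · rw [mul_zero]
    | .negSucc k, .ofNat l => by
      dsimp only
      rw [smul_lie, lie_smul, ← lie_skew, lie_annihilation_creation, ← neg_smul, smul_smul,
        smul_smul, add_comm (Int.negSucc k)]
      simp only [ofNat_add_negSucc_add_one_eq_zero_iff, eq_comm (a := l)]
      congr 1
      split_ifs
      · push_cast
        linear_combination
          -((k : A) + ⅟2) * s.inv_mul - invOf_two_add_invOf_two (R := A)
      · rw [neg_zero, mul_zero]
    | .negSucc k, .negSucc l => by
      rw [if_neg (by grind), zero_smul]
      exact (((commute_creation k l).smul_left _).smul_right _).lie_eq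
  eventually_boson_apply v := by
    rw [← Nat.map_cast_int_atTop, eventually_map]
    filter_upwards [eventually_annihilation v] with k hk
    exact (congrArg ((s : A) • ·) hk).trans (smul_zero _)

/-- The twisted boson acting on the polynomial ring by `b_r = s ∂_{x^{r+1/2}}` and
`b_{-r} = r s⁻¹ x^{r+1/2}` for `r > 0`. -/
def TwistedBoson.polynomial (s : Aˣ) : TwistedBoson A (MvPolynomial ℕ+ A) :=
  .ofCreationAnnihilation
    (fun k => (pderiv k.succPNat).toLinearMap)
    (fun k => LinearMap.mulLeft A (X k.succPNat))
    (fun _ _ => commute_pderiv _ _)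
    (fun _ _ => commute_mulLeft _ _)
    (fun k l => by simp only [lie_pderiv_mulLeft_X, Nat.succPNat_inj])
    (fun p => eventually_succPNat_of_cofinite (eventually_pderiv_apply_eq_zero p))
    s

/-- The boson and the fermion acting on the two factors of the tensor product of their Fock
spaces. -/
def BosonFermion.tensor (B : TwistedBoson A V) (Ψ : FreeFermion A W) :
    BosonFermion A (V ⊗[A] W) where
  boson n := (B.boson n).rTensor W
  lie_boson n l := by
    rw [Ring.lie_def, ← LinearMap.rTensor_mul, ← LinearMap.rTensor_mul, ← LinearMap.rTensor_sub,
      ← Ring.lie_def, B.lie_boson, LinearMap.rTensor_smul]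
    exact congrArg _ (LinearMap.rTensor_id W V)
  eventually_boson_apply v := by
    induction v using TensorProduct.induction_on with
    | zero => exact .of_forall fun n => map_zero _
    | tmul x y =>
      filter_upwards [B.eventually_boson_apply x] with n hx
      rw [LinearMap.rTensor_tmul, hx, zero_tmul]
    | add x y hx hy =>
      filter_upwards [hx, hy] with n hxn hyn
      rw [map_add, hxn, hyn, add_zero]
  fermion n := (Ψ.fermion n).lTensor V
  anticomm_fermion n l := by
    rw [← LinearMap.lTensor_mul, ← LinearMap.lTensor_mul, ← LinearMap.lTensor_add,
      Ψ.anticomm_fermion, LinearMap.lTensor_smul]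
    exact congrArg _ (LinearMap.lTensor_id V W)
  eventually_fermion_apply v := by
    induction v using TensorProduct.induction_on with
    | zero => exact .of_forall fun n => map_zero _
    | tmul x y =>
      filter_upwards [Ψ.eventually_fermion_apply y] with n hy
      rw [LinearMap.lTensor_tmul, hy, tmul_zero]
    | add x y hx hy =>
      filter_upwards [hx, hy] with n hxn hyn
      rw [map_add, hxn, hyn, add_zero]
  commute_boson_fermion n l :=
    (LinearMap.rTensor_comp_lTensor ..).trans (LinearMap.lTensor_comp_rTensor ..).symm

end FockSpace

section SuperSpaceModes

variable (F : Type) [Field F] [NeZero (2 : F)]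

/-- The inverse `cs F 2⁻¹` of `2` in the Laurent polynomial ring. -/
instance invertibleTwoR : Invertible (2 : R F) where
  invOf := cs F 2⁻¹
  invOf_mul_self := by
    rw [← map_ofNat LaurentPolynomial.C 2, cs, ← map_mul, inv_mul_cancel₀ two_ne_zero, map_one]
  mul_invOf_self := by
    rw [← map_ofNat LaurentPolynomial.C 2, cs, ← map_mul, mul_inv_cancel₀ two_ne_zero, map_one]

/-- The unit `√ℏ = t` of `R`. -/
def sqrtHbar : (R F)ˣ where
  val := LaurentPolynomial.T 1
  inv := LaurentPolynomial.T (-1)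
  val_inv := by rw [← LaurentPolynomial.T_add, add_neg_cancel, LaurentPolynomial.T_zero]
  inv_val := by rw [← LaurentPolynomial.T_add, neg_add_cancel, LaurentPolynomial.T_zero]

/-- The twisted bosons and the fermions acting on `SuperSpace F`. -/
def superModes : BosonFermion (R F) (SuperSpace F) :=
  .tensor (.polynomial (sqrtHbar F)) (.exterior (sqrtHbar F))

variable {F}

theorem bos_eq_boson (n : ℤ) : bos F n = (superModes F).boson n := by
  cases n with
  | ofNat k => exact congrArg DFunLike.coe (LinearMap.rTensor_smul (Podd F) _ _).symm
  | negSucc k =>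
    have coeff : ((-2 * Int.negSucc k - 1 : ℤ) : R F) * cs F 2⁻¹ = (k : R F) + ⅟2 := by
      change _ * ⅟(2 : R F) = _
      push_cast
      linear_combination
        ((k : R F) + 1) * mul_invOf_self (2 : R F) - invOf_two_add_invOf_two (R := R F)
    have bos_negSucc : bos F (Int.negSucc k) = fun v =>
        ((((-2 * Int.negSucc k - 1 : ℤ) : R F) * cs F 2⁻¹) * LaurentPolynomial.T (-1)) •
          mX F k.succPNat v := rfl
    rw [bos_negSucc, coeff]
    exact congrArg DFunLike.coe (LinearMap.rTensor_smul (Podd F) _ _).symm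

theorem fer_eq_fermion (n : ℤ) : fer F n = (superModes F).fermion n := by
  cases n with
  | ofNat k => exact congrArg DFunLike.coe (LinearMap.lTensor_smul (Pev F) _ _).symm
  | negSucc k => exact congrArg DFunLike.coe (LinearMap.lTensor_smul (Pev F) _ _).symm

theorem nb_eq_normalOrder (n m : ℤ) :
    nb F n m = (superModes F).toTwistedBoson.normalOrder n m := by
  rw [nb, TwistedBoson.normalOrder, bos_eq_boson, bos_eq_boson]
  split_ifs <;> rfl

theorem nf_eq_normalOrder (n m : ℤ) :
    nf F n m = (superModes F).toFreeFermion.normalOrder n m := by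
  rw [nf, FreeFermion.normalOrder, fer_eq_fermion, fer_eq_fermion]
  split_ifs <;> rfl

theorem dXi_eq_smul_boson {i : ℤ} (hi : 1 ≤ i) (v : SuperSpace F) :
    dXi F i v = (↑(sqrtHbar F)⁻¹ : R F) • (superModes F).boson (i - 1) v := by
  rw [← bos_eq_boson, dXi, bos, dif_pos hi, dif_pos (by omega)]
  simp only [sub_add_cancel]
  exact (inv_smul_smul (sqrtHbar F) _).symm

theorem dTi_eq_smul_fermion {i : ℤ} (hi : 1 ≤ i) (v : SuperSpace F) :
    dTi F i v = (↑(sqrtHbar F)⁻¹ : R F) • (superModes F).fermion (i - 1) v := by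
  rw [← fer_eq_fermion, dTi, fer, dif_pos hi, dif_pos (by omega)]
  simp only [sub_add_cancel]
  exact (inv_smul_smul (sqrtHbar F) _).symm

theorem finsum_nb_apply (m : ℤ) (v : SuperSpace F) :
    ∑ᶠ n, nb F n (m - 1 - n) v = (2 : R F) • (superModes F).bosonVirasoro m v := by
  simp only [nb_eq_normalOrder]
  exact ((superModes F).hasLocallyFiniteSum_normalOrder m).finsum_apply v

theorem finsum_nf_apply (m : ℤ) (v : SuperSpace F) :
    ∑ᶠ n : ℤ, (((2 * n + 1 + m : ℤ) : R F) * cs F 2⁻¹) • nf F (-n - 1) (m + n) v =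
      (2 : R F) • (superModes F).fermionVirasoro m v := by
  have coeff (n : ℤ) : ((2 * n + 1 + m : ℤ) : R F) * cs F 2⁻¹ =
      2 * (⅟2 * (((m + n : ℤ) : R F) + ⅟2 - ⅟2 * (m : R F))) := by
    change _ * ⅟(2 : R F) = _
    rw [mul_invOf_cancel_left]
    push_cast
    linear_combination ((n : R F) + m) * invOf_two_add_invOf_two (R := R F)
  have hF := ((((superModes F).hasLocallyFiniteSum_fermionVirasoro m).comp_equiv
    (Equiv.addLeft m)).const_smul 2).congr
    (T' := fun n => (((2 * n + 1 + m : ℤ) : R F) * cs F 2⁻¹) •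
      (superModes F).toFreeFermion.normalOrder (-n - 1) (m + n)) fun n => by
      rw [Equiv.coe_addLeft, smul_smul, ← coeff, show m - 1 - (m + n) = -n - 1 by ring]
  simp only [nf_eq_normalOrder]
  exact hF.finsum_apply v

theorem finsum_bos_fer_apply (m : ℤ) (v : SuperSpace F) :
    ∑ᶠ n, bos F (m - 1 - n) (fer F n v) = (superModes F).supercurrent m v := by
  simp only [bos_eq_boson, fer_eq_fermion]
  exact ((superModes F).hasLocallyFiniteSum_supercurrent m).finsum_apply v

theorem Hop_eq_shiftedVirasoro (N : ℤ) (D : ℤ → F) {i : ℤ} (hi : 1 ≤ i) :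
    Hop F N D i = (superModes F).shiftedVirasoro ↑(sqrtHbar F)⁻¹ (hb F)
      (if i ≤ N then cs F (D i) else 0) N i := by
  funext v
  have half_mul_two : cs F 2⁻¹ * hb F * 2 = hb F := by
    rw [mul_right_comm]
    exact (congrArg (· * hb F) (invOf_mul_self (2 : R F))).trans (one_mul _)
  have hD : (if i ≤ N then (hb F * cs F (D i)) • v else 0) =
      (hb F * if i ≤ N then cs F (D i) else 0) • v := by
    split_ifs
    · rfl
    · rw [mul_zero, zero_smul]
  have hB := finsum_nb_apply (i + N - 1) v
  have hF := finsum_nf_apply (i + N - 1) v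
  rw [show i + N - 1 - 1 = i + N - 2 by ring] at hB
  simp only [show ∀ n, 2 * n + 1 + (i + N - 1) = 2 * n + i + N by intro; ring] at hF
  rw [Hop, hB, hF, hD, smul_smul, smul_smul, half_mul_two, dXi_eq_smul_boson hi]
  simp only [BosonFermion.shiftedVirasoro, BosonFermion.virasoro, LinearMap.add_apply,
    LinearMap.smul_apply, Module.End.one_apply]
  module

theorem Fop_eq_shiftedSupercurrent (N : ℤ) {i : ℤ} (hi : 1 ≤ i) :
    Fop F N i = (superModes F).shiftedSupercurrent ↑(sqrtHbar F)⁻¹ (hb F) N i := by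
  funext v
  rw [Fop, dTi_eq_smul_fermion hi, show i + N - 2 = i + N - 1 - 1 by ring, finsum_bos_fer_apply,
    ← smul_add]
  rfl

end SuperSpaceModes

theorem statement8_general {F : Type} [Field F] [NeZero (2 : F)] (N : ℤ) (D : ℤ → F) :
    (∀ i j : ℤ, 1 ≤ i → 1 ≤ j → 1 ≤ i + N → 1 ≤ j + N → ∀ v : SuperSpace F,
      Hop F N D i (Hop F N D j v) - Hop F N D j (Hop F N D i v)
        = (hb F * ((i - j : ℤ) : R F)) • Hop F N D (i + j + N - 1) v) ∧
    (∀ i j : ℤ, 1 ≤ i → 1 ≤ j → 1 ≤ i + j + N - 1 → ∀ v : SuperSpace F,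
      Hop F N D i (Fop F N j v) - Fop F N j (Hop F N D i v)
        = (hb F * ((i - N + 1 - 2 * j : ℤ) : R F) * cs F (2 : F)⁻¹) •
            Fop F N (i + j + N - 1) v) ∧
    (∀ i j : ℤ, 1 ≤ i → 1 ≤ j → 1 ≤ i + N → 1 ≤ j + N → ∀ v : SuperSpace F,
      Fop F N i (Fop F N j v) + Fop F N j (Fop F N i v)
        = (2 * hb F) • Hop F N D (i + j + N - 1) v) := by
  refine ⟨fun i j hi hj hiN hjN v => ?_, fun i j hi hj hij v => ?_, fun i j hi hj hiN hjN v => ?_⟩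
  · rw [Hop_eq_shiftedVirasoro N D hi, Hop_eq_shiftedVirasoro N D hj,
      Hop_eq_shiftedVirasoro N D (i := i + j + N - 1) (by omega),
      if_neg (show ¬i + j + N - 1 ≤ N by omega)]
    push_cast
    exact LinearMap.congr_fun ((superModes F).lie_shiftedVirasoro _ _ _ _ hi hj hiN hjN) v
  · rw [Hop_eq_shiftedVirasoro N D hi, Fop_eq_shiftedSupercurrent N hj,
      Fop_eq_shiftedSupercurrent N hij]
    push_cast
    exact LinearMap.congr_fun ((superModes F).lie_shiftedVirasoro_shiftedSupercurrent _ _ _) v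
  · rw [Fop_eq_shiftedSupercurrent N hi, Fop_eq_shiftedSupercurrent N hj,
      Hop_eq_shiftedVirasoro N D (i := i + j + N - 1) (by omega),
      if_neg (show ¬i + j + N - 1 ≤ N by omega)]
    exact LinearMap.congr_fun ((superModes F).anticomm_shiftedSupercurrent _ _ hi hj hiN hjN) v

/-- For `N ≥ 0` and scalars `D_1, …, D_N`, the operators `H_i`, `F_i`
(`i ∈ ℤ_{≥1}`) satisfy the Ramond super Virasoro relations
`[H_i, H_j] = ℏ(i−j) H_{i+j+N−1}`, `[H_i, F_j] = ℏ((i−N+1)/2 − j) F_{i+j+N−1}` and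
`{F_i, F_j} = 2ℏ H_{i+j+N−1}`. -/
theorem statement8 (N : ℤ) (hN : 0 ≤ N) (D : ℤ → K) :
    (∀ i j : ℤ, 1 ≤ i → 1 ≤ j → ∀ v : SuperSpace K,
      Hop K N D i (Hop K N D j v) - Hop K N D j (Hop K N D i v)
        = (hb K * ((i - j : ℤ) : R K)) • Hop K N D (i + j + N - 1) v) ∧
    (∀ i j : ℤ, 1 ≤ i → 1 ≤ j → ∀ v : SuperSpace K,
      Hop K N D i (Fop K N j v) - Fop K N j (Hop K N D i v)
        = (hb K * ((i - N + 1 - 2 * j : ℤ) : R K) * cs K (2 : K)⁻¹) •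
            Fop K N (i + j + N - 1) v) ∧
    (∀ i j : ℤ, 1 ≤ i → 1 ≤ j → ∀ v : SuperSpace K,
      Fop K N i (Fop K N j v) + Fop K N j (Fop K N i v)
        = (2 * hb K) • Hop K N D (i + j + N - 1) v) := by
  obtain ⟨lie_H_H, lie_H_F, anticomm_F_F⟩ := statement8_general N D
  exact ⟨fun i j hi hj => lie_H_H i j hi hj (by omega) (by omega),
    fun i j hi hj => lie_H_F i j hi hj (by omega),
    fun i j hi hj => anticomm_F_F i j hi hj (by omega) (by omega)⟩

end
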